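/- Let K ⊆ ℝⁿ be compact, connected, with positive Lebesgue measure, satisfying Assumption 1, and let f be a real polynomial that is nonconstant on K. Let λ_f be the push-forward by f of the Lebesgue measure λ restricted to K. Then there exist a constant C > 0 and r₀ ∈ ℕ such that for every r ≥ r₀, every nonzero real polynomial p of degree r + 1 that is orthogonal to all polynomials of degree at most r with respect to λ_f (i.e., ∫ p·q dλ_f = 0 for all q with deg q ≤ r) has a real root in the interval [f_min, f_min + C·(log r)²/r²]. -/

import Mathlib

open MeasureTheory Polynomial Set

noncomputable section

/-- Assumption 1: there are `ε_K, η_K > 0` and `N ≥ n` such that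
`vol(K ∩ B_δ(x)) ≥ η_K δ^N vol(Bⁿ)` for all `x ∈ K` and `0 < δ ≤ ε_K`. -/
def Assumption1 {n : ℕ} (K : Set (EuclideanSpace ℝ (Fin n))) : Prop :=
  ∃ εK ηK N : ℝ, 0 < εK ∧ 0 < ηK ∧ (n : ℝ) ≤ N ∧
    ∀ x ∈ K, ∀ δ : ℝ, 0 < δ → δ ≤ εK →
      ENNReal.ofReal (ηK * δ ^ N) * volume (Metric.ball (0 : EuclideanSpace ℝ (Fin n)) 1)
        ≤ volume (K ∩ Metric.closedBall x δ)

lemma opsr_sign_lemma (m M : ℝ) : ∀ (d : ℕ) (p : ℝ[X]), p ≠ 0 → p.natDegree = d →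
    ∃ A : Finset ℝ, (∀ a ∈ A, p.IsRoot a ∧ a ∈ Icc m M) ∧
      ((∀ t ∈ Icc m M, 0 ≤ (p * ∏ a ∈ A, (X - C a)).eval t) ∨
       (∀ t ∈ Icc m M, (p * ∏ a ∈ A, (X - C a)).eval t ≤ 0)) := by
  intro d
  induction d with
  | zero =>
    intro p hp hd
    refine ⟨∅, by simp, ?_⟩
    obtain ⟨c, rfl⟩ := natDegree_eq_zero.1 hd
    simp only [Finset.prod_empty, mul_one, eval_C]
    rcases le_total 0 c with h | h
    · left; intros; exact h
    · right; intros; exact h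
  | succ d ih =>
    intro p hp hd
    by_cases hr : ∃ a ∈ Icc m M, p.IsRoot a
    · obtain ⟨a, ha, hpa⟩ := hr
      obtain ⟨p', rfl⟩ := dvd_iff_isRoot.2 hpa
      have hp' : p' ≠ 0 := right_ne_zero_of_mul hp
      have hd' : p'.natDegree = d := by
        rw [natDegree_mul (X_sub_C_ne_zero a) hp', natDegree_X_sub_C] at hd
        omega
      obtain ⟨A, hA, hs⟩ := ih p' hp' hd'
      have hroot : ∀ b, p'.IsRoot b → ((X - C a) * p').IsRoot b := by
        intro b hb
        simp only [IsRoot.def, eval_mul] at hb ⊢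
        rw [hb, mul_zero]
      by_cases haA : a ∈ A
      · refine ⟨A.erase a, fun b hb => ?_, ?_⟩
        · have := hA b (Finset.mem_of_mem_erase hb)
          exact ⟨hroot b this.1, this.2⟩
        · have : (X - C a) * p' * ∏ b ∈ A.erase a, (X - C b) = p' * ∏ b ∈ A, (X - C b) := by
            rw [← Finset.mul_prod_erase A _ haA]; ring
          rw [this]; exact hs
      · refine ⟨insert a A, fun b hb => ?_, ?_⟩
        · rcases Finset.mem_insert.1 hb with rfl | hb
          · exact ⟨hpa, ha⟩
          · exact ⟨hroot b (hA b hb).1, (hA b hb).2⟩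
        · have : (X - C a) * p' * ∏ b ∈ insert a A, (X - C b)
              = (X - C a)^2 * (p' * ∏ b ∈ A, (X - C b)) := by
            rw [Finset.prod_insert haA]; ring
          rw [this]
          rcases hs with hs | hs
          · left; intro t ht
            rw [eval_mul]
            refine mul_nonneg ?_ (hs t ht)
            rw [eval_pow]; positivity
          · right; intro t ht
            rw [eval_mul]
            refine mul_nonpos_of_nonneg_of_nonpos ?_ (hs t ht)
            rw [eval_pow]; positivity
    · push Not at hr
      refine ⟨∅, by simp, ?_⟩
      simp only [Finset.prod_empty, mul_one]
      by_contra hcon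
      push Not at hcon
      obtain ⟨⟨t, ht, h1⟩, s, hs, h2⟩ := hcon
      have hcv : (0:ℝ) ∈ (fun x => p.eval x) '' Icc m M := by
        have := isPreconnected_Icc (a := m) (b := M) |>.intermediate_value ht hs
          (f := fun x => p.eval x) p.continuous.continuousOn
        exact this ⟨h1.le, h2.le⟩
      obtain ⟨z, hz, hz0⟩ := hcv
      exact hr z hz hz0

lemma opsr_integrable (μ : Measure ℝ) [IsFiniteMeasure μ] (m M : ℝ)
    (hsupp : ∀ᵐ t ∂μ, t ∈ Icc m M) (p : ℝ[X]) : Integrable (fun t => p.eval t) μ := by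
  have : IntegrableOn (fun t => p.eval t) (Icc m M) μ :=
    p.continuous.continuousOn.integrableOn_compact isCompact_Icc
  rwa [IntegrableOn, Measure.restrict_eq_self_of_ae_mem hsupp] at this

lemma opsr_pos (μ : Measure ℝ) [IsFiniteMeasure μ] (m M : ℝ) (hmM : m < M)
    (hsupp : ∀ᵐ t ∂μ, t ∈ Icc m M)
    (hpos : ∀ t ∈ Icc m M, ∀ s > 0, 0 < μ (Icc (t - s) (t + s)))
    (g : ℝ[X]) (hg : g ≠ 0) (hg0 : ∀ t ∈ Icc m M, 0 ≤ g.eval t) :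
    ∫ t, g.eval t ∂μ ≠ 0 := by
  intro h
  rw [integral_eq_zero_iff_of_nonneg_ae (hsupp.mono fun t ht => hg0 t ht)
    (opsr_integrable μ m M hsupp g)] at h
  have hfin : {t | g.IsRoot t}.Finite := finite_setOfPred_isRoot hg
  obtain ⟨t, ht, htn⟩ := ((Icc_infinite hmM).sdiff hfin).nonempty
  have hopen : IsOpen {t | g.eval t ≠ 0} := isOpen_ne_fun g.continuous continuous_const
  obtain ⟨s, hs, hsub⟩ := Metric.isOpen_iff.1 hopen t htn
  have h1 := hpos t ht (s/2) (by positivity)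
  have h2 : μ (Icc (t - s/2) (t + s/2)) ≤ μ {t | g.eval t ≠ 0} := by
    apply measure_mono
    intro u hu
    apply hsub
    rw [Metric.mem_ball, Real.dist_eq, abs_lt]
    constructor <;> linarith [hu.1, hu.2]
  have h3 : μ {t | g.eval t ≠ 0} = 0 := h
  rw [h3] at h2
  exact absurd h1 (not_lt.2 h2)

/-- Gauss quadrature consequence. -/
lemma opsr_gauss (μ : Measure ℝ) [IsFiniteMeasure μ] (m M : ℝ)
    (hsupp : ∀ᵐ t ∂μ, t ∈ Icc m M) (r : ℕ) (p : ℝ[X]) (hp : p ≠ 0) (hd : p.natDegree = r + 1)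
    (horth : ∀ q : ℝ[X], q.natDegree ≤ r → ∫ t, p.eval t * q.eval t ∂μ = 0)
    (A : Finset ℝ) (hA : ∀ a ∈ A, p.IsRoot a) (hcard : A.card = r + 1)
    (g : ℝ[X]) (hg : g.natDegree ≤ 2 * r + 1) (hg0 : ∀ a ∈ A, 0 ≤ g.eval a) :
    0 ≤ ∫ t, g.eval t ∂μ := by
  have hint := opsr_integrable μ m M hsupp
  have hinj : Set.InjOn (id : ℝ → ℝ) A := Set.injOn_id _
  have hdeg : p.degree = (A.card : WithBot ℕ) := by
    rw [degree_eq_natDegree hp, hd, hcard]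
  have key : ∀ g : ℝ[X], g.natDegree ≤ 2 * r + 1 → ∫ t, g.eval t ∂μ =
      ∑ a ∈ A, g.eval a * ∫ t, (Lagrange.basis A id a).eval t ∂μ := by
    intro g hg
    have h1 : ∀ t, g.eval t = p.eval t * (g / p).eval t + (g % p).eval t := by
      intro t
      rw [← eval_mul, ← eval_add, EuclideanDomain.div_add_mod]
    have h2 : ∀ a ∈ A, (g % p).eval a = g.eval a := by
      intro a ha
      have := hA a ha
      rw [h1 a, this.eq_zero]; ring
    have h3 : g % p = Lagrange.interpolate A id (fun a => g.eval a) := by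
      apply Lagrange.eq_interpolate_of_eval_eq _ hinj
      · rw [← hdeg]; exact degree_mod_lt g hp
      · intro a ha; exact h2 a ha
    calc ∫ t, g.eval t ∂μ = ∫ t, (p.eval t * (g / p).eval t + (g % p).eval t) ∂μ := by
          simp_rw [← h1]
      _ = ∫ t, p.eval t * (g / p).eval t ∂μ + ∫ t, (g % p).eval t ∂μ := by
          apply integral_add _ (hint _)
          simpa [eval_mul] using hint (p * (g/p))
      _ = ∫ t, (g % p).eval t ∂μ := by
          rw [horth, zero_add]
          rw [div_def]
          refine (natDegree_C_mul_le _ _).trans ?_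
          rw [natDegree_divByMonic _ (monic_mul_leadingCoeff_inv hp),
            natDegree_mul_leadingCoeff_inv _ hp]
          omega
      _ = ∫ t, ∑ a ∈ A, g.eval a * (Lagrange.basis A id a).eval t ∂μ := by
          rw [h3]
          simp [Lagrange.interpolate_apply, eval_finsetSum]
      _ = _ := by
          rw [integral_finsetSum]
          · simp_rw [integral_const_mul]
          · intro a _; exact (hint _).const_mul _
  rw [key g hg]
  refine Finset.sum_nonneg fun a ha => mul_nonneg (hg0 a ha) ?_
  have hb := key ((Lagrange.basis A id a)^2) (by
    rw [natDegree_pow, Lagrange.natDegree_basis hinj ha]; omega)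
  rw [Finset.sum_eq_single a] at hb
  · have : (Lagrange.basis A id a).eval a = 1 := Lagrange.eval_basis_self hinj ha
    rw [eval_pow, this, one_pow, one_mul] at hb
    rw [← hb]
    apply integral_nonneg
    intro t
    simp only [eval_pow, Pi.zero_apply]; positivity
  · intro b hb hba
    have : (Lagrange.basis A id a).eval b = 0 := Lagrange.eval_basis_of_ne (v := id) hba.symm hb
    rw [eval_pow, this]; simp
  · intro h; exact absurd ha h

lemma opsr_cheb (r : ℕ) (δ y : ℝ) (h0 : 0 ≤ δ) (h1 : δ ≤ 1) (hy : 1 + δ ≤ y) :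
    Real.exp (r * √δ) / 2 ≤ (Chebyshev.T ℝ r).eval y := by
  have hy1 : 1 ≤ y := by linarith
  set θ := Real.arcosh y with hθ
  have hc : Real.cosh θ = y := Real.cosh_arcosh hy1
  have hθ0 : 0 ≤ θ := Real.arcosh_nonneg hy1
  have hle : √δ ≤ θ := by
    apply Real.sqrt_le_iff.2 ⟨hθ0, ?_⟩
    have h2 := Real.cosh_le_exp_half_sq θ
    rw [hc] at h2
    have h3 : Real.log (1 + δ) ≤ θ ^ 2 / 2 := by
      rw [Real.log_le_iff_le_exp (by linarith)]; linarith
    have h4 := Real.one_sub_inv_le_log_of_pos (x := 1 + δ) (by linarith)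
    have h5 : δ / 2 ≤ 1 - (1 + δ)⁻¹ := by
      have : 1 - (1+δ)⁻¹ = δ / (1 + δ) := by field_simp; ring
      rw [this]
      gcongr; linarith
    linarith
  rw [← hc, Chebyshev.T_real_cosh, Real.cosh_eq]
  have : Real.exp (r * √δ) ≤ Real.exp (((r:ℤ):ℝ) * θ) := by
    rw [Int.cast_natCast]
    gcongr
  have := Real.exp_pos (-(((r:ℤ):ℝ) * θ))
  linarith


/-- The one-step contradiction. -/
lemma opsr_step (μ : Measure ℝ) [IsFiniteMeasure μ] (m M : ℝ) (hmM : m < M)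
    (hsupp : ∀ᵐ t ∂μ, t ∈ Icc m M)
    (hpos : ∀ t ∈ Icc m M, ∀ s > 0, 0 < μ (Icc (t - s) (t + s)))
    (r : ℕ) (p : ℝ[X]) (hp : p ≠ 0) (hd : p.natDegree = r + 1)
    (horth : ∀ q : ℝ[X], q.natDegree ≤ r → ∫ t, p.eval t * q.eval t ∂μ = 0)
    (ε : ℝ) (hε : 0 < ε) (hεM : ε < M - m)
    (hbig : (M - m) * μ.real univ <
      ε / 2 * (Real.exp (r * √(ε / (M - m))) / 2) ^ 2 * μ.real (Icc (m - ε / 2) (m + ε / 2))) :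
    ∃ t, p.IsRoot t ∧ t ∈ Icc m (m + ε) := by
  by_contra hcon
  push Not at hcon
  obtain ⟨A, hA, hs⟩ := opsr_sign_lemma m M _ p hp rfl
  have hA1 : ∀ a ∈ A, p.IsRoot a := fun a ha => (hA a ha).1
  have hA2 : ∀ a ∈ A, m + ε < a := by
    intro a ha
    by_contra h
    exact hcon a (hA a ha).1 ⟨(hA a ha).2.1, not_lt.1 h⟩
  have hprod : (∏ a ∈ A, (X - C a)).natDegree = A.card := by
    rw [natDegree_prod_of_monic _ _ (fun a _ => monic_X_sub_C a)]
    simp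
  have hprod0 : (∏ a ∈ A, (X - C a)) ≠ 0 := Finset.prod_ne_zero_iff.2 fun a _ => X_sub_C_ne_zero a
  have hcard : A.card = r + 1 := by
    apply le_antisymm
    · rw [← hd]
      have : A ⊆ p.roots.toFinset := by
        intro a ha
        rw [Multiset.mem_toFinset, mem_roots hp]
        exact hA1 a ha
      exact (Finset.card_le_card this).trans ((Multiset.toFinset_card_le _).trans (card_roots' p))
    · by_contra hlt
      have h0 := horth (∏ a ∈ A, (X - C a)) (by omega)
      have h1 : ∫ t, (p * ∏ a ∈ A, (X - C a)).eval t ∂μ = 0 := by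
        rw [← h0]; congr 1; ext t; rw [eval_mul]
      rcases hs with hs | hs
      · exact opsr_pos μ m M hmM hsupp hpos _ (mul_ne_zero hp hprod0) hs h1
      · refine opsr_pos μ m M hmM hsupp hpos (-(p * ∏ a ∈ A, (X - C a)))
          (neg_ne_zero.2 (mul_ne_zero hp hprod0)) (fun t ht => ?_) ?_
        · rw [eval_neg]; linarith [hs t ht]
        · simp_rw [eval_neg]
          rw [integral_neg, h1, neg_zero]
  -- the test polynomial
  set ξ := m + ε with hξ
  have hMξ : 0 < M - ξ := by linarith
  have hMm : 0 < M - m := by linarith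
  set L : ℝ[X] := C (-(2 / (M - ξ))) * X + C (1 + 2 * ξ / (M - ξ)) with hL
  have hLe : ∀ t, L.eval t = 1 + 2 * (ξ - t) / (M - ξ) := by
    intro t; simp [hL]; field_simp; ring
  set q := (Chebyshev.T ℝ r).comp L with hq
  have hqd : q.natDegree ≤ r := by
    refine natDegree_comp_le.trans ?_
    rw [Chebyshev.natDegree_T]
    have : L.natDegree ≤ 1 := natDegree_linear_le
    simpa using Nat.mul_le_mul_left r this
  set g := (X - C ξ) * q ^ 2 with hg
  have hge : ∀ t, g.eval t = (t - ξ) * (q.eval t) ^ 2 := by intro t; simp [hg]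
  have hgn : 0 ≤ ∫ t, g.eval t ∂μ := by
    refine opsr_gauss μ m M hsupp r p hp hd horth A hA1 hcard g ?_ ?_
    · refine natDegree_mul_le.trans ?_
      rw [natDegree_X_sub_C, natDegree_pow]; omega
    · intro a ha
      rw [hge]
      have := hA2 a ha
      exact mul_nonneg (by linarith) (sq_nonneg _)
  set B := Real.exp (r * √(ε / (M - m))) / 2 with hB
  have hB0 : 0 < B := by positivity
  set S := Icc (m - ε / 2) (m + ε / 2) with hS
  have hSm : MeasurableSet S := measurableSet_Icc
  have hbound : ∀ᵐ t ∂μ, g.eval t ≤ (M - m) - S.indicator (fun _ => ε / 2 * B ^ 2) t := by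
    filter_upwards [hsupp] with t ht
    rw [hge]
    by_cases htS : t ∈ S
    · rw [indicator_of_mem htS]
      have hBq : B ≤ q.eval t := by
        rw [hq, eval_comp, hLe]
        apply opsr_cheb
        · positivity
        · rw [div_le_one hMm]; linarith
        · have : ε / (M - m) ≤ 2 * (ξ - t) / (M - ξ) := by
            have := htS.2
            gcongr <;> linarith
          linarith
      have h2 : B ^ 2 ≤ q.eval t ^ 2 := by gcongr
      have h3 : ε / 2 ≤ ξ - t := by have := htS.2; linarith
      have h4 : ε / 2 * B ^ 2 ≤ (ξ - t) * q.eval t ^ 2 := by gcongr; linarith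
      linarith
    · rw [indicator_of_notMem htS, sub_zero]
      by_cases htξ : t ≤ ξ
      · have : (t - ξ) * q.eval t ^ 2 ≤ 0 :=
          mul_nonpos_of_nonpos_of_nonneg (by linarith) (sq_nonneg _)
        linarith
      · push Not at htξ
        have hq1 : |q.eval t| ≤ 1 := by
          rw [hq, eval_comp, hLe]
          apply Chebyshev.abs_eval_T_real_le_one
          have h5 : 2 * (ξ - t) / (M - ξ) ≤ 0 :=
            div_nonpos_of_nonpos_of_nonneg (by linarith) hMξ.le
          have h6 : -2 ≤ 2 * (ξ - t) / (M - ξ) := by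
            rw [le_div_iff₀ hMξ]; linarith [ht.2]
          rw [abs_le]; constructor <;> linarith
        have h7 : q.eval t ^ 2 ≤ 1 := (sq_le_one_iff_abs_le_one _).2 hq1
        calc (t - ξ) * q.eval t ^ 2 ≤ (t - ξ) * 1 := by
              gcongr
          _ ≤ M - m := by linarith [ht.2]
  have hi1 : Integrable (fun _ : ℝ => M - m) μ := integrable_const _
  have hi2 : Integrable (S.indicator (fun _ => ε / 2 * B ^ 2)) μ :=
    (integrable_const _).indicator hSm
  have h8 := integral_mono_ae (opsr_integrable μ m M hsupp g) (hi1.sub hi2) hbound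
  have h9 : ∫ t, ((M - m) - S.indicator (fun _ => ε / 2 * B ^ 2) t) ∂μ
      = (M - m) * μ.real univ - ε / 2 * B ^ 2 * μ.real S := by
    rw [integral_sub hi1 hi2, integral_const, integral_indicator_const _ hSm]
    simp only [smul_eq_mul]; ring
  have h10 : ∫ t, g.eval t ∂μ ≤ (M - m) * μ.real univ - ε / 2 * B ^ 2 * μ.real S := by
    rw [← h9]; exact h8
  linarith

open Filter Topology in
lemma opsr_abstract (μ : Measure ℝ) [IsFiniteMeasure μ] (m M : ℝ) (hmM : m < M)
    (hsupp : ∀ᵐ t ∂μ, t ∈ Icc m M) (c s₀ : ℝ) (N : ℕ) (hc : 0 < c) (hs₀ : 0 < s₀)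
    (hlow : ∀ t ∈ Icc m M, ∀ s, 0 < s → s ≤ s₀ → c * s ^ N ≤ μ.real (Icc (t - s) (t + s))) :
    ∃ C > (0 : ℝ), ∃ r₀ : ℕ, ∀ r : ℕ, r₀ ≤ r →
      ∀ p : Polynomial ℝ, p ≠ 0 → p.natDegree = r + 1 →
        (∀ q : Polynomial ℝ, q.natDegree ≤ r → (∫ t, p.eval t * q.eval t ∂μ) = 0) →
        ∃ t : ℝ, p.IsRoot t ∧ t ∈ Icc m (m + C * (Real.log r) ^ 2 / (r : ℝ) ^ 2) := by
  have hMm : 0 < M - m := by linarith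
  have hpos : ∀ t ∈ Icc m M, ∀ s > 0, 0 < μ (Icc (t - s) (t + s)) := by
    intro t ht s hs
    have h1 := hlow t ht (min s s₀) (lt_min hs hs₀) (min_le_right _ _)
    have h2 : 0 < c * (min s s₀) ^ N := by have := lt_min hs hs₀; positivity
    have h3 : 0 < μ (Icc (t - min s s₀) (t + min s s₀)) := by
      have := h2.trans_le h1
      rw [Measure.real, ENNReal.toReal_pos_iff] at this
      exact this.1
    refine h3.trans_le (measure_mono (Icc_subset_Icc ?_ ?_)) <;> linarith [min_le_left s s₀]
  set a : ℝ := N + 2 with ha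
  set K := (M - m) * a ^ 2 with hK
  have hK0 : 0 < K := by positivity
  have hlim : Tendsto (fun r : ℕ => K * (Real.log r) ^ 2 / (r : ℝ) ^ 2) atTop (𝓝 0) := by
    have h1 : Tendsto (fun x : ℝ => Real.log x / x) atTop (𝓝 0) :=
      Real.isLittleO_log_id_atTop.tendsto_div_nhds_zero
    have h2 := ((h1.pow 2).const_mul K).comp (tendsto_natCast_atTop_atTop (R := ℝ))
    simp only [ne_eq, OfNat.ofNat_ne_zero, not_false_eq_true, zero_pow, mul_zero] at h2
    refine h2.congr fun r => ?_
    simp only [Function.comp]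
    rw [div_pow, mul_div_assoc]
  have hD : 0 < c / 4 * ((M - m) / 2) ^ (N + 1) := by positivity
  have hev : ∀ᶠ r : ℕ in atTop, 3 ≤ r ∧ K * (Real.log r) ^ 2 / (r : ℝ) ^ 2 < min (M - m) s₀ ∧
      (M - m) * μ.real univ / (c / 4 * ((M - m) / 2) ^ (N + 1)) < r := by
    refine (eventually_ge_atTop 3).and ((hlim.eventually_lt_const (lt_min hMm hs₀)).and ?_)
    exact tendsto_natCast_atTop_atTop.eventually_gt_atTop _
  obtain ⟨r₀, hr₀⟩ := eventually_atTop.1 hev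
  refine ⟨K, hK0, r₀, fun r hr p hp hd horth => ?_⟩
  obtain ⟨hr3, hsmall, hbig⟩ := hr₀ r hr
  have hr3' : (3:ℝ) ≤ r := by exact_mod_cast hr3
  have hr0 : (0:ℝ) < r := by linarith
  have hlog : 1 ≤ Real.log r := by
    rw [Real.le_log_iff_exp_le hr0]
    linarith [Real.exp_one_lt_d9]
  set ε := K * (Real.log r) ^ 2 / (r : ℝ) ^ 2 with hε
  have hε0 : 0 < ε := by positivity
  refine opsr_step μ m M hmM hsupp hpos r p hp hd horth ε hε0
    (hsmall.trans_le (min_le_left _ _)) ?_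
  have hεs : ε / 2 ≤ s₀ := by linarith [hsmall.trans_le (min_le_right _ _)]
  have hl := hlow m ⟨le_rfl, hmM.le⟩ (ε / 2) (by positivity) hεs
  have hsq : √(ε / (M - m)) = a * Real.log r / r := by
    have : ε / (M - m) = (a * Real.log r / r) ^ 2 := by
      rw [hε, hK]; field_simp
    rw [this, Real.sqrt_sq (by positivity)]
  have hexp : Real.exp (r * √(ε / (M - m))) = (r : ℝ) ^ (N + 2) := by
    rw [hsq]
    have : (r : ℝ) * (a * Real.log r / r) = ((N + 2 : ℕ) : ℝ) * Real.log r := by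
      rw [ha]; field_simp; push_cast; ring
    rw [this, Real.exp_nat_mul, Real.exp_log hr0]
  rw [hexp]
  have hεl : (M - m) / 2 / (r : ℝ) ^ 2 ≤ ε / 2 := by
    have h1 : 1 ≤ a ^ 2 * (Real.log r) ^ 2 := by
      have : 1 ≤ a := by rw [ha]; linarith [(Nat.cast_nonneg N : (0:ℝ) ≤ N)]
      have h2 : 1 ≤ a * Real.log r := by nlinarith
      rw [← mul_pow]; nlinarith
    have h3 : ε / 2 = (M - m) / 2 / (r : ℝ) ^ 2 * (a ^ 2 * (Real.log r) ^ 2) := by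
      rw [hε, hK]; field_simp
    rw [h3]
    exact le_mul_of_one_le_right (by positivity) h1
  rw [div_lt_iff₀ hD] at hbig
  have hr1 : (r : ℝ) ≤ (r : ℝ) ^ 2 := by nlinarith
  calc (M - m) * μ.real univ < r * (c / 4 * ((M - m) / 2) ^ (N + 1)) := hbig
    _ ≤ (r : ℝ) ^ 2 * (c / 4 * ((M - m) / 2) ^ (N + 1)) := by gcongr
    _ = ((r : ℝ) ^ (N + 2) / 2) ^ 2 * c * ((M - m) / 2 / (r : ℝ) ^ 2) ^ (N + 1) := by
        rw [div_pow ((M - m) / 2)]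
        field_simp
        ring
    _ ≤ ((r : ℝ) ^ (N + 2) / 2) ^ 2 * c * (ε / 2) ^ (N + 1) := by gcongr
    _ = ε / 2 * ((r : ℝ) ^ (N + 2) / 2) ^ 2 * (c * (ε / 2) ^ N) := by ring
    _ ≤ _ := by gcongr

lemma opsr_contDiff {n : ℕ} (f : MvPolynomial (Fin n) ℝ) :
    ContDiff ℝ 1 (fun x : EuclideanSpace ℝ (Fin n) => MvPolynomial.eval (fun i => x i) f) := by
  induction f using MvPolynomial.induction_on with
  | C a => simpa using contDiff_const
  | add p q hp hq => simpa using hp.add hq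
  | mul_X p i hp =>
    simp only [map_mul, MvPolynomial.eval_X]
    exact hp.mul (by fun_prop)

/-- A Lipschitz type bound at points of `K`. -/
lemma opsr_lip {n : ℕ} (K : Set (EuclideanSpace ℝ (Fin n))) (hKc : IsCompact K)
    (f : MvPolynomial (Fin n) ℝ) :
    ∃ L : ℝ, 0 < L ∧ ∀ x ∈ K, ∀ y ∈ K,
      |MvPolynomial.eval (fun i => y i) f - MvPolynomial.eval (fun i => x i) f| ≤ L * dist y x := by
  obtain ⟨R, hR⟩ := hKc.isBounded.subset_closedBall 0
  have hcd := opsr_contDiff f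
  set F := fun x : EuclideanSpace ℝ (Fin n) => MvPolynomial.eval (fun i => x i) f with hF
  obtain ⟨B, hB⟩ := (isCompact_closedBall (0 : EuclideanSpace ℝ (Fin n)) R).exists_bound_of_continuousOn
    (hcd.continuous_fderiv one_ne_zero).continuousOn
  refine ⟨max B 1, by positivity, fun x hx y hy => ?_⟩
  have := (convex_closedBall (0 : EuclideanSpace ℝ (Fin n)) R).norm_image_sub_le_of_norm_fderiv_le
    (f := F) (𝕜 := ℝ) (C := max B 1)
    (fun z _ => (hcd.differentiable one_ne_zero) z)
    (fun z hz => (hB z hz).trans (le_max_left _ _)) (hR hx) (hR hy)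
  rw [dist_eq_norm]
  exact this

/-- Consequence for orthogonal polynomials of the push-forward measure `λ_f`:
every orthogonal polynomial of degree `r+1` with respect to `λ_f` has a root in
`[f_min, f_min + C log² r / r²]`. -/
theorem orthogonal_polynomial_smallest_root {n : ℕ}
    (K : Set (EuclideanSpace ℝ (Fin n)))
    (hKc : IsCompact K) (hKconn : IsConnected K) (hKpos : 0 < volume K)
    (hK1 : Assumption1 K) (f : MvPolynomial (Fin n) ℝ)
    (hnonconst : ∃ x ∈ K, ∃ y ∈ K,
      MvPolynomial.eval (fun i => x i) f ≠ MvPolynomial.eval (fun i => y i) f) :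
    ∃ C > (0 : ℝ), ∃ r₀ : ℕ, ∀ r : ℕ, r₀ ≤ r →
      ∀ p : Polynomial ℝ, p ≠ 0 → p.natDegree = r + 1 →
        (∀ q : Polynomial ℝ, q.natDegree ≤ r →
          (∫ t, p.eval t * q.eval t
            ∂(Measure.map (fun x => MvPolynomial.eval (fun i => x i) f)
              (volume.restrict K))) = 0) →
        ∃ t : ℝ, p.IsRoot t ∧
          t ∈ Icc (sInf ((fun x => MvPolynomial.eval (fun i => x i) f) '' K))
            (sInf ((fun x => MvPolynomial.eval (fun i => x i) f) '' K) +
              C * (Real.log r) ^ 2 / (r : ℝ) ^ 2) := by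
  obtain ⟨L, hL, hlip⟩ := opsr_lip K hKc f
  have hcont := (opsr_contDiff f).continuous
  set F := fun x : EuclideanSpace ℝ (Fin n) => MvPolynomial.eval (fun i => x i) f with hF
  have hmeas : Measurable F := hcont.measurable
  have hcomp : IsCompact (F '' K) := hKc.image hcont
  have hne : (F '' K).Nonempty := hKconn.nonempty.image F
  set m := sInf (F '' K) with hm
  set M := sSup (F '' K) with hM
  have hmmem : m ∈ F '' K := hcomp.sInf_mem hne
  have hMmem : M ∈ F '' K := hcomp.sSup_mem hne
  have hsub : ∀ x ∈ K, F x ∈ Icc m M := fun x hx =>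
    ⟨csInf_le hcomp.bddBelow (mem_image_of_mem F hx),
      le_csSup hcomp.bddAbove (mem_image_of_mem F hx)⟩
  have hmM : m < M := by
    obtain ⟨x, hx, y, hy, hxy⟩ := hnonconst
    by_contra h
    apply hxy
    have h1 := hsub x hx
    have h2 := hsub y hy
    change F x = F y
    linarith [h1.1, h1.2, h2.1, h2.2]
  have hfin : IsFiniteMeasure (volume.restrict K) := ⟨by
    rw [Measure.restrict_apply_univ]; exact hKc.measure_lt_top⟩
  have hsurj : ∀ t ∈ Icc m M, ∃ x ∈ K, F x = t := by
    intro t ht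
    have := (hKconn.isPreconnected.image F hcont.continuousOn).ordConnected.out hmmem hMmem ht
    exact this
  set μ := Measure.map F (volume.restrict K) with hμ
  have hsupp : ∀ᵐ t ∂μ, t ∈ Icc m M := by
    refine (ae_map_iff hmeas.aemeasurable (p := fun t => t ∈ Icc m M) measurableSet_Icc).2 ?_
    filter_upwards [ae_restrict_mem hKc.measurableSet] with x hx using hsub x hx
  obtain ⟨εK, ηK, N, hεK, hηK, hN, hvol⟩ := hK1
  have hN0 : 0 ≤ N := (Nat.cast_nonneg n).trans hN
  set v := volume.real (Metric.ball (0 : EuclideanSpace ℝ (Fin n)) 1) with hv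
  have hv0 : 0 < v := by
    rw [hv, Measure.real, ENNReal.toReal_pos_iff]
    exact ⟨Metric.measure_ball_pos _ _ one_pos, measure_ball_lt_top⟩
  refine opsr_abstract μ m M hmM hsupp (ηK * v / L ^ ⌈N⌉₊) (min εK 1 * L) ⌈N⌉₊ (by positivity)
    (by positivity) ?_
  intro t ht s hs hss
  obtain ⟨x, hx, rfl⟩ := hsurj t ht
  set δ := s / L with hδ
  have hδ0 : 0 < δ := by positivity
  have hδ1 : δ ≤ min εK 1 := by rw [hδ, div_le_iff₀ hL]; exact hss
  have h1 := hvol x hx δ hδ0 (hδ1.trans (min_le_left _ _))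
  have h2 : volume (K ∩ Metric.closedBall x δ) ≤ μ (Icc (F x - s) (F x + s)) := by
    rw [hμ, Measure.map_apply hmeas measurableSet_Icc,
      Measure.restrict_apply (hmeas measurableSet_Icc)]
    apply measure_mono
    rintro y ⟨hy, hyx⟩
    refine ⟨?_, hy⟩
    have h3 : |F y - F x| ≤ s := by
      refine (hlip x hx y hy).trans ?_
      calc L * dist y x ≤ L * δ := by gcongr; exact hyx
        _ = s := by rw [hδ]; field_simp
    rw [abs_le] at h3
    constructor <;> linarith [h3.1, h3.2]
  have h4 : ηK * δ ^ N * v ≤ μ.real (Icc (F x - s) (F x + s)) := by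
    have := ENNReal.toReal_mono (measure_ne_top μ _) (h1.trans h2)
    rw [ENNReal.toReal_mul, ENNReal.toReal_ofReal (by positivity)] at this
    exact this
  refine le_trans ?_ h4
  have h5 : δ ^ ⌈N⌉₊ ≤ δ ^ N := by
    rw [← Real.rpow_natCast]
    exact Real.rpow_le_rpow_of_exponent_ge hδ0 (hδ1.trans (min_le_right _ _)) (Nat.le_ceil N)
  calc ηK * v / L ^ ⌈N⌉₊ * s ^ ⌈N⌉₊ = ηK * δ ^ ⌈N⌉₊ * v := by rw [hδ, div_pow]; ring
    _ ≤ ηK * δ ^ N * v := by gcongr
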